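/- With v = (2/9)a³ − ab − 3c, there exist nonzero rational numbers C, C₁, C₂ such that, in U(𝔤), modulo the left ideal U(𝔤)𝔫₊: (E₂₁³F₂₁⁶)_L(v) ≡ C·((2/9)H₂₁(H₂₁−1)(H₂₁−2) + H₂₁(H₂₁−2) + 3H₀₁(H₀₁+2)); (E₁₀³F₃₁³)_L(v) ≡ C₁·H₁₀(H₁₀−1)(H₁₀−2); (E₁₁³F₃₂³)_L(v) ≡ C₂·((2/9)H₁₁(H₁₁−1)(H₁₁−2) + 6H₀₁H₃₂). -/

import Mathlib

/-- The canonical embedding of a Lie algebra into its universal enveloping algebra. -/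
noncomputable def ιU {L : Type*} [LieRing L] [LieAlgebra ℂ L] (x : L) :
    UniversalEnvelopingAlgebra ℂ L :=
  UniversalEnvelopingAlgebra.ι ℂ x

/-- The adjoint action `X_L : f ↦ Xf − fX` of `X ∈ L` on `U(L)`. -/
noncomputable def adU {L : Type*} [LieRing L] [LieAlgebra ℂ L] (x : L)
    (f : UniversalEnvelopingAlgebra ℂ L) : UniversalEnvelopingAlgebra ℂ L :=
  ιU x * f - f * ιU x

/-- A Lie algebra over `ℂ` equipped with Chevalley generators of type `G₂`:
`E₁₀, F₁₀, H₁₀` correspond to the short simple root `α` and `E₀₁, F₀₁, H₀₁` to the long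
simple root `β`, subject to the Chevalley relations and the Serre relations, and the
generators generate the Lie algebra.  (By Serre's theorem such a Lie algebra is a quotient of
the simple Lie algebra of type `G₂`.) -/
structure G2Gens (L : Type*) [LieRing L] [LieAlgebra ℂ L] where
  E10 : L
  E01 : L
  F10 : L
  F01 : L
  H10 : L
  H01 : L
  hH10H01 : ⁅H10, H01⁆ = 0
  hE10F10 : ⁅E10, F10⁆ = H10
  hE01F01 : ⁅E01, F01⁆ = H01
  hE10F01 : ⁅E10, F01⁆ = 0
  hE01F10 : ⁅E01, F10⁆ = 0
  hH10E10 : ⁅H10, E10⁆ = (2 : ℂ) • E10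
  hH01E01 : ⁅H01, E01⁆ = (2 : ℂ) • E01
  hH10E01 : ⁅H10, E01⁆ = (-3 : ℂ) • E01
  hH01E10 : ⁅H01, E10⁆ = (-1 : ℂ) • E10
  hH10F10 : ⁅H10, F10⁆ = (-2 : ℂ) • F10
  hH01F01 : ⁅H01, F01⁆ = (-2 : ℂ) • F01
  hH10F01 : ⁅H10, F01⁆ = (3 : ℂ) • F01
  hH01F10 : ⁅H01, F10⁆ = (1 : ℂ) • F10
  serreE1 : ⁅E10, ⁅E10, ⁅E10, ⁅E10, E01⁆⁆⁆⁆ = 0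
  serreE2 : ⁅E01, ⁅E01, E10⁆⁆ = 0
  serreF1 : ⁅F10, ⁅F10, ⁅F10, ⁅F10, F01⁆⁆⁆⁆ = 0
  serreF2 : ⁅F01, ⁅F01, F10⁆⁆ = 0
  generates : LieSubalgebra.lieSpan ℂ L {E10, E01, F10, F01, H10, H01} = ⊤

namespace G2Gens

variable {L : Type*} [LieRing L] [LieAlgebra ℂ L] (g : G2Gens L)

/-- The root vector `E₁₁ = [E₁₀, E₀₁]`. -/
def E11 : L := ⁅g.E10, g.E01⁆
/-- The root vector `E₂₁ = (1/2)[E₁₁, E₁₀]`. -/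
noncomputable def E21 : L := (2 : ℂ)⁻¹ • ⁅g.E11, g.E10⁆
/-- The root vector `E₃₁ = (1/3)[E₂₁, E₁₀]`. -/
noncomputable def E31 : L := (3 : ℂ)⁻¹ • ⁅g.E21, g.E10⁆
/-- The root vector `E₃₂ = [E₃₁, E₀₁]`. -/
noncomputable def E32 : L := ⁅g.E31, g.E01⁆
/-- The root vector `F₁₁ = [F₀₁, F₁₀]`. -/
def F11 : L := ⁅g.F01, g.F10⁆
/-- The root vector `F₂₁ = (1/2)[F₁₀, F₁₁]`. -/
noncomputable def F21 : L := (2 : ℂ)⁻¹ • ⁅g.F10, g.F11⁆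
/-- The root vector `F₃₁ = (1/3)[F₁₀, F₂₁]`. -/
noncomputable def F31 : L := (3 : ℂ)⁻¹ • ⁅g.F10, g.F21⁆
/-- The root vector `F₃₂ = [F₀₁, F₃₁]`. -/
noncomputable def F32 : L := ⁅g.F01, g.F31⁆
/-- The coroot `H₁₁ = H₁₀ + 3H₀₁`. -/
def H11 : L := g.H10 + (3 : ℂ) • g.H01
/-- The coroot `H₂₁ = 2H₁₀ + 3H₀₁`. -/
def H21 : L := (2 : ℂ) • g.H10 + (3 : ℂ) • g.H01
/-- The coroot `H₃₁ = H₁₀ + H₀₁`. -/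
def H31 : L := g.H10 + g.H01
/-- The coroot `H₃₂ = H₁₀ + 2H₀₁`. -/
def H32 : L := g.H10 + (2 : ℂ) • g.H01

/-- The element `a = E₂₁` of `U(𝔤)`. -/
noncomputable def aU : UniversalEnvelopingAlgebra ℂ L := ιU g.E21
/-- The element `b = E₃₁E₁₁ − E₃₂E₁₀` of `U(𝔤)`. -/
noncomputable def bU : UniversalEnvelopingAlgebra ℂ L :=
  ιU g.E31 * ιU g.E11 - ιU g.E32 * ιU g.E10
/-- The element `c = E₃₁²E₀₁ − E₃₂E₃₁H₀₁ − E₃₂²F₀₁` of `U(𝔤)`. -/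
noncomputable def cU : UniversalEnvelopingAlgebra ℂ L :=
  ιU g.E31 * ιU g.E31 * ιU g.E01 - ιU g.E32 * ιU g.E31 * ιU g.H01
    - ιU g.E32 * ιU g.E32 * ιU g.F01
/-- The element `u = (1/3)a² − b` of `U(𝔤)`. -/
noncomputable def uU : UniversalEnvelopingAlgebra ℂ L :=
  (3 : ℂ)⁻¹ • (g.aU * g.aU) - g.bU
/-- The element `v = (2/9)a³ − ab − 3c` of `U(𝔤)`. -/
noncomputable def vU : UniversalEnvelopingAlgebra ℂ L :=
  ((2 : ℂ) / 9) • (g.aU * g.aU * g.aU) - g.aU * g.bU - (3 : ℂ) • g.cU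

/-- `f ≡ h (mod U(𝔤)𝔫₊)`:  `f − h` lies in the left ideal of `U(𝔤)` generated by `E₁₀`
and `E₀₁`. -/
def EqModN (f h : UniversalEnvelopingAlgebra ℂ L) : Prop :=
  ∃ A B : UniversalEnvelopingAlgebra ℂ L, f - h = A * ιU g.E10 + B * ιU g.E01

end G2Gens

namespace G2Proof

/-! ### Noncommutative polynomials with integer coefficients, as lists -/

/-- Linear combinations of words in the letters `0, …, 13`. -/
abbrev Poly := List (ℤ × List ℕ)

/-- Structure constants of `G₂` in the ordered basis
`F32 F31 F21 F11 F01 F10 H10 H01 E10 E01 E11 E21 E31 E32`. -/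
def table : List (List (List (ℤ × ℕ))) := [
   [[], [], [], [], [], [], [], [(1, 0)], [], [(-1, 1)], [(-1, 2)], [(1, 3)], [(1, 4)], [(-1, 6), (-2, 7)]],
   [[], [], [], [], [(-1, 0)], [], [(3, 1)], [(-1, 1)], [(-1, 2)], [], [], [(1, 5)], [(-1, 6), (-1, 7)], [(1, 9)]],
   [[], [], [], [(-3, 0)], [], [(-3, 1)], [(1, 2)], [], [(-2, 3)], [], [(2, 5)], [(-2, 6), (-3, 7)], [(1, 8)], [(1, 10)]],
   [[], [], [(3, 0)], [], [], [(-2, 2)], [(-1, 3)], [(1, 3)], [(3, 4)], [(-1, 5)], [(-1, 6), (-3, 7)], [(2, 8)], [], [(-1, 11)]],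
   [[], [(1, 0)], [], [], [], [(1, 3)], [(-3, 4)], [(2, 4)], [], [(-1, 7)], [(-1, 8)], [], [], [(-1, 12)]],
   [[], [], [(3, 1)], [(2, 2)], [(-1, 3)], [], [(2, 5)], [(-1, 5)], [(-1, 6)], [], [(3, 9)], [(-2, 10)], [(-1, 11)], []],
   [[], [(-3, 1)], [(-1, 2)], [(1, 3)], [(3, 4)], [(-2, 5)], [], [], [(2, 8)], [(-3, 9)], [(-1, 10)], [(1, 11)], [(3, 12)], []],
   [[(-1, 0)], [(1, 1)], [], [(-1, 3)], [(-2, 4)], [(1, 5)], [], [], [(-1, 8)], [(2, 9)], [(1, 10)], [], [(-1, 12)], [(1, 13)]],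
   [[], [(1, 2)], [(2, 3)], [(-3, 4)], [], [(1, 6)], [(-2, 8)], [(1, 8)], [], [(1, 10)], [(-2, 11)], [(-3, 12)], [], []],
   [[(1, 1)], [], [], [(1, 5)], [(1, 7)], [], [(3, 9)], [(-2, 9)], [(-1, 10)], [], [], [], [(-1, 13)], []],
   [[(1, 2)], [], [(-2, 5)], [(1, 6), (3, 7)], [(1, 8)], [(-3, 9)], [(1, 10)], [(-1, 10)], [(2, 11)], [], [], [(-3, 13)], [], []],
   [[(-1, 3)], [(-1, 5)], [(2, 6), (3, 7)], [(-2, 8)], [], [(2, 10)], [(-1, 11)], [], [(3, 12)], [], [(3, 13)], [], [], []],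
   [[(-1, 4)], [(1, 6), (1, 7)], [(-1, 8)], [], [], [(1, 11)], [(-3, 12)], [(1, 12)], [], [(1, 13)], [], [], [], []],
   [[(1, 6), (2, 7)], [(-1, 9)], [(-1, 10)], [(1, 11)], [(1, 12)], [], [], [(-1, 13)], [], [], [], [], [], []]]

/-- The bracket of two basis elements. -/
def br (i j : ℕ) : List (ℤ × ℕ) := (table.getD i []).getD j []

/-- Replace the letter `k` by the word `k :: t`. -/
def tailTo (t : List ℕ) : List (ℤ × ℕ) → Poly
  | [] => []
  | (c, k) :: l => (c, k :: t) :: tailTo t l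

/-- Left multiplication by a letter. -/
def consTo (x : ℕ) : Poly → Poly
  | [] => []
  | (c, w) :: l => (c, x :: w) :: consTo x l

/-- Equality test of words. -/
def weq : List ℕ → List ℕ → Bool
  | [], [] => true
  | x :: s, y :: t => Nat.beq x y && weq s t
  | _, _ => false

/-- Insert a term into a polynomial, merging equal words. -/
def ins (c : ℤ) (w : List ℕ) : Poly → Poly
  | [] => [(c, w)]
  | (d, u) :: t => bif weq w u then (c + d, u) :: t else (d, u) :: ins c w t

/-- Add a multiple of a polynomial. -/
def addTo (c : ℤ) : Poly → Poly → Poly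
  | [], q => q
  | (d, w) :: p, q => ins (c * d) w (addTo c p q)

/-- Drop the terms with zero coefficient. -/
def clean : Poly → Poly
  | [] => []
  | (c, w) :: p => bif decide (c = 0) then clean p else (c, w) :: clean p

/-- Linear extension of a map on words (raw). -/
def linRaw (f : List ℕ → Poly) : Poly → Poly
  | [] => []
  | (c, w) :: p => addTo c (f w) (linRaw f p)

/-- Linear extension of a map on words. -/
def lin (f : List ℕ → Poly) (p : Poly) : Poly := clean (linRaw f p)

/-- Adjoint action of the letter `x` on a word. -/
def adW (x : ℕ) : List ℕ → Poly
  | [] => []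
  | y :: t => tailTo t (br x y) ++ consTo y (adW x t)

/-- Does the word end with a positive root vector? -/
def kill : List ℕ → Bool
  | [] => false
  | x :: t => match t with
    | [] => Nat.ble 8 x
    | y :: s => kill (y :: s)

/-- Straighten the first descent of a word. -/
def bub : List ℕ → Poly
  | [] => [(1, [])]
  | x :: t => match t with
    | [] => [(1, [x])]
    | y :: s => bif Nat.blt y x then (1, y :: x :: s) :: tailTo s (br x y)
        else consTo x (bub (y :: s))

/-- One reduction step modulo the left ideal. -/
def red (w : List ℕ) : Poly := bif kill w then [] else bub w

/-- Multiply a polynomial by a word on the left. -/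
def mulW (w : List ℕ) (c : ℤ) : Poly → Poly
  | [] => []
  | (d, u) :: q => (c * d, w ++ u) :: mulW w c q

/-- Product of polynomials. -/
def mulP : Poly → Poly → Poly
  | [], _ => []
  | (c, w) :: p, q => mulW w c q ++ mulP p q

/-- Scalar multiple. -/
def smulP (c : ℤ) (p : Poly) : Poly := mulW [] c p

set_option linter.unusedSectionVars false

section eval

variable {U : Type*} [Ring U] [Algebra ℂ U] (b : ℕ → U)

/-- Value of a word. -/
def wv (w : List ℕ) : U := (w.map b).prod

/-- Value of a polynomial. -/
def ev : Poly → U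
  | [] => 0
  | (c, w) :: p => (c : ℂ) • wv b w + ev p

@[simp] lemma wv_nil : wv b [] = 1 := by simp [wv]
@[simp] lemma wv_cons (x : ℕ) (w : List ℕ) : wv b (x :: w) = b x * wv b w := by simp [wv]
lemma wv_append (w u : List ℕ) : wv b (w ++ u) = wv b w * wv b u := by simp [wv]

@[simp] lemma ev_nil : ev b [] = 0 := rfl
@[simp] lemma ev_cons (c : ℤ) (w : List ℕ) (p : Poly) :
    ev b ((c, w) :: p) = (c : ℂ) • wv b w + ev b p := rfl

@[simp] lemma ev_append (p q : Poly) : ev b (p ++ q) = ev b p + ev b q := by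
  induction p with
  | nil => simp
  | cons a p ih => obtain ⟨c, w⟩ := a; simp [ih, add_assoc]

lemma ev_tailTo (t : List ℕ) (l : List (ℤ × ℕ)) :
    ev b (tailTo t l) = ev b (tailTo [] l) * wv b t := by
  induction l with
  | nil => simp [tailTo]
  | cons a p ih => obtain ⟨c, w⟩ := a; simp [tailTo, ih, add_mul]

lemma ev_consTo (x : ℕ) (p : Poly) : ev b (consTo x p) = b x * ev b p := by
  induction p with
  | nil => simp [consTo]
  | cons a p ih => obtain ⟨c, w⟩ := a; simp [consTo, ih, mul_add]

lemma weq_eq (w u : List ℕ) (h : weq w u = true) : w = u := by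
  induction w generalizing u with
  | nil => cases u with
    | nil => rfl
    | cons y t => simp [weq] at h
  | cons x s ih => cases u with
    | nil => simp [weq] at h
    | cons y t =>
      simp only [weq, Bool.and_eq_true] at h
      rw [Nat.eq_of_beq_eq_true h.1, ih _ h.2]

lemma ev_ins (c : ℤ) (w : List ℕ) (p : Poly) :
    ev b (ins c w p) = (c : ℂ) • wv b w + ev b p := by
  induction p with
  | nil => simp [ins]
  | cons a p ih =>
    obtain ⟨d, u⟩ := a
    rw [ins]
    cases h : weq w u with
    | true =>
      have := weq_eq _ _ h
      subst this
      simp [add_smul, add_assoc]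
    | false => simp [ih, add_left_comm]

lemma ev_addTo (c : ℤ) (p q : Poly) : ev b (addTo c p q) = (c : ℂ) • ev b p + ev b q := by
  induction p with
  | nil => simp [addTo]
  | cons a p ih => obtain ⟨d, w⟩ := a; simp [addTo, ev_ins, ih, mul_smul, add_assoc]

lemma ev_clean (p : Poly) : ev b (clean p) = ev b p := by
  induction p with
  | nil => simp [clean]
  | cons a p ih =>
    obtain ⟨d, w⟩ := a
    rw [clean]
    by_cases h : d = 0
    · simp [h, ih]
    · simp [h, ih]

lemma ev_mulW (w : List ℕ) (c : ℤ) (p : Poly) :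
    ev b (mulW w c p) = (c : ℂ) • (wv b w * ev b p) := by
  induction p with
  | nil => simp [mulW]
  | cons a p ih =>
    obtain ⟨d, u⟩ := a; simp [mulW, ih, mul_add, wv_append, mul_smul]

lemma ev_mulP (p q : Poly) : ev b (mulP p q) = ev b p * ev b q := by
  induction p with
  | nil => simp [mulP]
  | cons a p ih => obtain ⟨d, u⟩ := a; simp [mulP, ih, ev_mulW, add_mul]

lemma ev_smulP (c : ℤ) (p : Poly) : ev b (smulP c p) = (c : ℂ) • ev b p := by
  simp [smulP, ev_mulW]

/-- The `x`-th row of the bracket table is correct. -/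
def Row (x : ℕ) : Prop := ∀ j, b x * b j - b j * b x = ev b (tailTo [] (br x j))

variable {b}

lemma ev_adW {x : ℕ} (h : Row b x) (w : List ℕ) :
    ev b (adW x w) = b x * wv b w - wv b w * b x := by
  induction w with
  | nil => simp [adW]
  | cons y t ih =>
    rw [adW, ev_append, ev_tailTo, ← h y, ev_consTo, ih, wv_cons]
    noncomm_ring

lemma ev_linAd {x : ℕ} (h : Row b x) (p : Poly) :
    ev b (lin (adW x) p) = b x * ev b p - ev b p * b x := by
  rw [lin, ev_clean]
  induction p with
  | nil => simp [linRaw]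
  | cons a p ih =>
    obtain ⟨d, u⟩ := a
    simp only [linRaw, ev_addTo, ih, ev_adW h, ev_cons, mul_add, add_mul, smul_sub,
      mul_smul_comm, smul_mul_assoc]
    abel

/-- Test that row `x` follows from rows `y`, `z` when `d • x = [y, z]`. -/
def chk (d : ℤ) (x y z : ℕ) (j : ℕ) : Bool :=
  (lin (fun w => [(1, w)])
    (smulP (-d) (lin (adW x) [(1, [j])]) ++ lin (adW y) (lin (adW z) [(1, [j])])
      ++ smulP (-1) (lin (adW z) (lin (adW y) [(1, [j])])))).isEmpty

lemma ev_lin_id (p : Poly) : ev b (lin (fun w => [(1, w)]) p) = ev b p := by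
  rw [lin, ev_clean]
  induction p with
  | nil => simp [linRaw]
  | cons a p ih => obtain ⟨d, u⟩ := a; simp [linRaw, ev_addTo, ih]

lemma ev_of_isEmpty {p : Poly} (h : p.isEmpty = true) : ev b p = 0 := by
  rw [List.isEmpty_iff] at h; simp [h]

lemma ev_linAd_single (x j : ℕ) :
    ev b (lin (adW x) [(1, [j])]) = ev b (tailTo [] (br x j)) := by
  rw [lin, ev_clean]
  simp [linRaw, adW, ev_addTo, consTo]

lemma row_of (d : ℤ) (hd : d ≠ 0) {x y z : ℕ} (hx : (d : ℂ) • b x = b y * b z - b z * b y)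
    (hy : Row b y) (hz : Row b z) (hb : ∀ j, b (j + 14) = 0) (hbr : ∀ j, br x (j + 14) = [])
    (hc : ∀ j < 14, chk d x y z j = true) : Row b x := by
  intro j
  by_cases hj : j < 14
  · have h1 := ev_of_isEmpty (b := b) (hc j hj)
    rw [ev_lin_id, ev_append, ev_append, ev_smulP, ev_smulP, ev_linAd_single,
      ev_linAd hy, ev_linAd hz, ev_linAd hz, ev_linAd hy] at h1
    have hd' : (d : ℂ) ≠ 0 := by exact_mod_cast hd
    apply smul_right_injective U hd'
    have h2 : (d : ℂ) • (b x * b j - b j * b x)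
        = (b y * b z - b z * b y) * b j - b j * (b y * b z - b z * b y) := by
      rw [← hx, smul_sub, smul_mul_assoc, mul_smul_comm]
    show (d : ℂ) • (b x * b j - b j * b x) = (d : ℂ) • ev b (tailTo [] (br x j))
    rw [h2]
    simp only [ev_cons, ev_nil, wv_cons, wv_nil, Int.cast_one, one_smul, mul_one, add_zero,
      Int.cast_neg, neg_smul] at h1
    rw [← sub_eq_zero, ← h1]
    noncomm_ring
  · obtain ⟨k, rfl⟩ : ∃ k, j = k + 14 := ⟨j - 14, by omega⟩
    simp [hb, hbr, tailTo]

lemma wv_mem_of_kill {I : Submodule U U} (hI : ∀ k, 8 ≤ k → b k ∈ I) (w : List ℕ)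
    (h : kill w = true) : wv b w ∈ I := by
  induction w with
  | nil => simp [kill] at h
  | cons x t ih =>
    cases t with
    | nil => simpa using hI x (Nat.le_of_ble_eq_true h)
    | cons y s =>
      rw [wv_cons]
      exact I.smul_mem (b x) (ih (by simpa [kill] using h))

lemma ev_bub (hr : ∀ x, Row b x) (w : List ℕ) : ev b (bub w) = wv b w := by
  induction w with
  | nil => simp [bub]
  | cons x t ih =>
    cases t with
    | nil => simp [bub]
    | cons y s =>
      simp only [bub]
      cases Nat.blt y x with
      | true =>
        simp only [cond_true, ev_cons, ev_tailTo b s, ← hr x y, wv_cons, Int.cast_one, one_smul]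
        noncomm_ring
      | false => simp only [cond_false, ev_consTo, ih, wv_cons]

lemma ev_red {I : Submodule U U} (hI : ∀ k, 8 ≤ k → b k ∈ I) (hr : ∀ x, Row b x)
    (w : List ℕ) : wv b w - ev b (red w) ∈ I := by
  rw [red]
  cases h : kill w with
  | true => simpa using wv_mem_of_kill hI w h
  | false => simp [ev_bub hr]

lemma csmul_mem {I : Submodule U U} (c : ℂ) {x : U} (h : x ∈ I) : c • x ∈ I := by
  have := I.smul_mem (c • (1 : U)) h
  simpa using this

lemma ev_linRed {I : Submodule U U} (hI : ∀ k, 8 ≤ k → b k ∈ I) (hr : ∀ x, Row b x)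
    (p : Poly) : ev b p - ev b (lin red p) ∈ I := by
  rw [lin, ev_clean]
  induction p with
  | nil => simp [linRaw]
  | cons a p ih =>
    obtain ⟨d, u⟩ := a
    have := I.add_mem (csmul_mem (d : ℂ) (ev_red hI hr u)) ih
    simp only [linRaw, ev_addTo, ev_cons]
    convert this using 1
    rw [smul_sub]; abel

lemma mem_of_red {I : Submodule U U} (hI : ∀ k, 8 ≤ k → b k ∈ I) (hr : ∀ x, Row b x)
    (n : ℕ) (p : Poly) (h : ((lin red)^[n] p).isEmpty = true) : ev b p ∈ I := by
  induction n generalizing p with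
  | zero => rw [ev_of_isEmpty (p := p) h]; exact I.zero_mem
  | succ n ih =>
    have h1 := I.add_mem (ev_linRed hI hr p) (ih (lin red p) h)
    simpa using h1

end eval

/-! ### Brackets in the Lie algebra -/

section lie

variable {L : Type*} [LieRing L] [LieAlgebra ℂ L]

lemma wt {h x y : L} {a c : ℂ} (hx : ⁅h, x⁆ = a • x) (hy : ⁅h, y⁆ = c • y) :
    ⁅h, ⁅x, y⁆⁆ = (a + c) • ⁅x, y⁆ := by
  rw [leibniz_lie, hx, hy, smul_lie, lie_smul, add_smul]

lemma wts {h x : L} {a c : ℂ} (hx : ⁅h, x⁆ = a • x) : ⁅h, c • x⁆ = a • (c • x) := by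
  rw [lie_smul, hx, smul_comm]

/-- The positive part of `G₂`. -/
lemma pos {x y p q r s : L} (hp : p = ⁅x, y⁆) (hq : q = (2 : ℂ)⁻¹ • ⁅p, x⁆)
    (hr : r = (3 : ℂ)⁻¹ • ⁅q, x⁆) (hs : s = ⁅r, y⁆)
    (s1 : ⁅x, ⁅x, ⁅x, ⁅x, y⁆⁆⁆⁆ = 0) (s2 : ⁅y, ⁅y, x⁆⁆ = 0) :
    ⁅x, p⁆ = (-2 : ℂ) • q ∧ ⁅x, q⁆ = (-3 : ℂ) • r ∧ ⁅x, r⁆ = 0 ∧ ⁅x, s⁆ = 0 ∧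
    ⁅y, p⁆ = 0 ∧ ⁅y, q⁆ = 0 ∧ ⁅y, r⁆ = -s ∧ ⁅y, s⁆ = 0 := by
  have xp : ⁅x, p⁆ = (-2 : ℂ) • q := by
    rw [hq, ← lie_skew x p, smul_smul]; module
  have xq : ⁅x, q⁆ = (-3 : ℂ) • r := by
    rw [hr, ← lie_skew x q, smul_smul]; module
  have xr : ⁅x, r⁆ = 0 := by
    rw [← hp, xp, lie_smul, xq, lie_smul, lie_smul, smul_smul] at s1
    exact (smul_eq_zero.1 s1).resolve_left (by norm_num)
  have yp : ⁅y, p⁆ = 0 := by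
    rw [hp, ← lie_skew x y, lie_neg, s2, neg_zero]
  have yx : ⁅y, x⁆ = -p := by rw [hp, lie_skew]
  have xy : ⁅x, y⁆ = p := hp.symm
  have yq : ⁅y, q⁆ = 0 := by
    rw [hq, lie_smul, leibniz_lie, yp, yx]; simp
  have yr : ⁅y, r⁆ = -s := by rw [hs, lie_skew]
  have pq : ⁅p, q⁆ = (-3 : ℂ) • s := by
    have := leibniz_lie x y q
    rw [yq, lie_zero, xq, lie_smul, yr, xy] at this
    rw [← sub_eq_zero, this]; module
  have xs : ⁅x, s⁆ = -⁅p, r⁆ := by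
    rw [hs, leibniz_lie, xr, xy, zero_lie, zero_add, lie_skew]
  have pr : ⁅p, r⁆ = 0 := by
    have := leibniz_lie x p q
    rw [pq, xp, xq, lie_smul, xs, smul_lie, lie_self, lie_smul] at this
    have h6 : (6 : ℂ) • ⁅p, r⁆ = 0 := by
      rw [← sub_eq_zero] at this
      rw [← this]; module
    exact (smul_eq_zero.1 h6).resolve_left (by norm_num)
  have ys : ⁅y, s⁆ = 0 := by
    have := leibniz_lie y p q
    rw [pq, yp, yq, lie_smul, zero_lie, lie_zero, add_zero] at this
    exact (smul_eq_zero.1 this).resolve_left (by norm_num)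
  exact ⟨xp, xq, xr, by rw [xs, pr, neg_zero], yp, yq, yr, ys⟩



variable (g : G2Gens L)

/-- The ordered Chevalley basis. -/
noncomputable def bas : ℕ → L
  | 0 => g.F32 | 1 => g.F31 | 2 => g.F21 | 3 => g.F11 | 4 => g.F01 | 5 => g.F10
  | 6 => g.H10 | 7 => g.H01
  | 8 => g.E10 | 9 => g.E01 | 10 => g.E11 | 11 => g.E21 | 12 => g.E31 | 13 => g.E32
  | _ => 0

/-- The basis inside the enveloping algebra. -/
noncomputable def bU (j : ℕ) : UniversalEnvelopingAlgebra ℂ L := ιU (bas g j)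

/-- Value of a linear combination in the Lie algebra. -/
noncomputable def lv : List (ℤ × ℕ) → L
  | [] => 0
  | (c, k) :: l => (c : ℂ) • bas g k + lv l

lemma ι_lie (x y : L) : ιU ⁅x, y⁆ = ιU x * ιU y - ιU y * ιU x := by
  unfold ιU
  letI : LieRing (UniversalEnvelopingAlgebra ℂ L) := LieRing.ofAssociativeRing
  exact LieHom.map_lie (UniversalEnvelopingAlgebra.ι ℂ) x y

lemma ι_smul (c : ℂ) (x : L) : ιU (c • x) = c • ιU x := by
  unfold ιU
  exact map_smul _ _ _

lemma ι_add (x y : L) : ιU (x + y) = ιU x + ιU y := by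
  unfold ιU
  exact map_add _ _ _

lemma ι_zero : ιU (0 : L) = 0 := by
  unfold ιU
  exact map_zero _

lemma ι_lv (l : List (ℤ × ℕ)) : ιU (lv g l) = ev (bU g) (tailTo [] l) := by
  induction l with
  | nil => simp [lv, tailTo, ι_zero]
  | cons a l ih => obtain ⟨c, k⟩ := a; simp [lv, tailTo, ι_add, ι_smul, ih, bU]

lemma row_of_lie {x : ℕ} (h : ∀ j, ⁅bas g x, bas g j⁆ = lv g (br x j)) : Row (bU g) x := by
  intro j
  rw [← ι_lv, ← h, ι_lie]; rfl

lemma skew_of {x y z : L} (h : ⁅x, y⁆ = z) : ⁅y, x⁆ = -z := by rw [← h, lie_skew]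

lemma rowH10 : ∀ j, ⁅bas g 6, bas g j⁆ = lv g (br 6 j) := by
  have f11 : ⁅g.H10, g.F11⁆ = (1 : ℂ) • g.F11 := by
    rw [G2Gens.F11, wt g.hH10F01 g.hH10F10]; norm_num
  have f21 : ⁅g.H10, g.F21⁆ = (-1 : ℂ) • g.F21 := by
    rw [G2Gens.F21, wts (wt g.hH10F10 f11)]; norm_num
  have f31 : ⁅g.H10, g.F31⁆ = (-3 : ℂ) • g.F31 := by
    rw [G2Gens.F31, wts (wt g.hH10F10 f21)]; norm_num
  have f32 : ⁅g.H10, g.F32⁆ = 0 := by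
    rw [G2Gens.F32, wt g.hH10F01 f31]; norm_num
  have e11 : ⁅g.H10, g.E11⁆ = (-1 : ℂ) • g.E11 := by
    rw [G2Gens.E11, wt g.hH10E10 g.hH10E01]; norm_num
  have e21 : ⁅g.H10, g.E21⁆ = (1 : ℂ) • g.E21 := by
    rw [G2Gens.E21, wts (wt e11 g.hH10E10)]; norm_num
  have e31 : ⁅g.H10, g.E31⁆ = (3 : ℂ) • g.E31 := by
    rw [G2Gens.E31, wts (wt e21 g.hH10E10)]; norm_num
  have e32 : ⁅g.H10, g.E32⁆ = 0 := by
    rw [G2Gens.E32, wt e31 g.hH10E01]; norm_num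
  intro j
  rcases j with _|_|_|_|_|_|_|_|_|_|_|_|_|_|j <;>
    simp [bas, br, table, lv, f11, f21, f31, f32, e11, e21, e31, e32, g.hH10H01, g.hH10E10,
      g.hH10E01, g.hH10F10, g.hH10F01]

lemma rowH01 : ∀ j, ⁅bas g 7, bas g j⁆ = lv g (br 7 j) := by
  have f11 : ⁅g.H01, g.F11⁆ = (-1 : ℂ) • g.F11 := by
    rw [G2Gens.F11, wt g.hH01F01 g.hH01F10]; norm_num
  have f21 : ⁅g.H01, g.F21⁆ = (0 : ℂ) • g.F21 := by
    rw [G2Gens.F21, wts (wt g.hH01F10 f11)]; norm_num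
  have f31 : ⁅g.H01, g.F31⁆ = (1 : ℂ) • g.F31 := by
    rw [G2Gens.F31, wts (wt g.hH01F10 f21)]; norm_num
  have f32 : ⁅g.H01, g.F32⁆ = (-1 : ℂ) • g.F32 := by
    rw [G2Gens.F32, wt g.hH01F01 f31]; norm_num
  have e11 : ⁅g.H01, g.E11⁆ = (1 : ℂ) • g.E11 := by
    rw [G2Gens.E11, wt g.hH01E10 g.hH01E01]; norm_num
  have e21 : ⁅g.H01, g.E21⁆ = (0 : ℂ) • g.E21 := by
    rw [G2Gens.E21, wts (wt e11 g.hH01E10)]; norm_num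
  have e31 : ⁅g.H01, g.E31⁆ = (-1 : ℂ) • g.E31 := by
    rw [G2Gens.E31, wts (wt e21 g.hH01E10)]; norm_num
  have e32 : ⁅g.H01, g.E32⁆ = (1 : ℂ) • g.E32 := by
    rw [G2Gens.E32, wt e31 g.hH01E01]; norm_num
  intro j
  rcases j with _|_|_|_|_|_|_|_|_|_|_|_|_|_|j <;>
    simp [bas, br, table, lv, f11, f21, f31, f32, e11, e21, e31, e32, skew_of g.hH10H01,
      g.hH01E10, g.hH01E01, g.hH01F10, g.hH01F01]

lemma posF : ⁅g.F10, g.F11⁆ = (2 : ℂ) • g.F21 ∧ ⁅g.F10, g.F21⁆ = (3 : ℂ) • g.F31 ∧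
    ⁅g.F10, g.F31⁆ = 0 ∧ ⁅g.F10, g.F32⁆ = 0 ∧
    ⁅g.F01, g.F11⁆ = 0 ∧ ⁅g.F01, g.F21⁆ = 0 ∧ ⁅g.F01, g.F31⁆ = g.F32 ∧ ⁅g.F01, g.F32⁆ = 0 := by
  have := pos (x := -g.F10) (y := g.F01) (p := g.F11) (q := g.F21)
      (r := g.F31) (s := -g.F32) (by rw [neg_lie, lie_skew]; rfl)
      (by rw [lie_neg, lie_skew]; rfl) (by rw [lie_neg, lie_skew]; rfl)
      (by rw [G2Gens.F32, lie_skew])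
      (by simp only [neg_lie, lie_neg, neg_neg]; exact g.serreF1)
      (by rw [lie_neg, lie_neg, g.serreF2, neg_zero])
  simp only [neg_lie, lie_neg, neg_smul, neg_inj, neg_neg, neg_eq_zero] at this
  exact this

lemma rowE10 : ∀ j, ⁅bas g 8, bas g j⁆ = lv g (br 8 j) := by
  obtain ⟨e11, e21, e31, e32, -⟩ := pos (x := g.E10) (y := g.E01) (p := g.E11) (q := g.E21)
    (r := g.E31) (s := g.E32) rfl rfl rfl rfl g.serreE1 g.serreE2
  have e01 : ⁅g.E10, g.E01⁆ = g.E11 := rfl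
  have h11 : ⁅g.H10, g.F11⁆ = g.F11 := by simpa [bas, br, table, lv] using rowH10 g 3
  have h21 : ⁅g.H10, g.F21⁆ = -g.F21 := by simpa [bas, br, table, lv] using rowH10 g 2
  have k11 : ⁅g.F10, g.F01⁆ = -g.F11 := by rw [G2Gens.F11, lie_skew]
  have k12 : ⁅g.F10, g.F11⁆ = (2 : ℂ) • g.F21 := by rw [G2Gens.F21, smul_smul]; norm_num
  have f11 : ⁅g.E10, g.F11⁆ = (-3 : ℂ) • g.F01 := by
    rw [G2Gens.F11, leibniz_lie, g.hE10F01, g.hE10F10, skew_of g.hH10F01, zero_lie]; module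
  have f21 : ⁅g.E10, g.F21⁆ = (2 : ℂ) • g.F11 := by
    rw [G2Gens.F21, lie_smul, leibniz_lie, g.hE10F10, f11, h11, lie_smul, k11]; module
  have f31 : ⁅g.E10, g.F31⁆ = g.F21 := by
    rw [G2Gens.F31, lie_smul, leibniz_lie, g.hE10F10, f21, h21, lie_smul, k12]; module
  have f32 : ⁅g.E10, g.F32⁆ = 0 := by
    have := (posF g).2.2.2.2.2.1
    rw [G2Gens.F32, leibniz_lie, g.hE10F01, f31, zero_lie, this, add_zero]
  intro j
  rcases j with _|_|_|_|_|_|_|_|_|_|_|_|_|_|j <;>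
    simp [bas, br, table, lv, f11, f21, f31, f32, e01, e11, e21, e31, e32, skew_of g.hH10E10,
      skew_of g.hH01E10, g.hE10F10, g.hE10F01]

lemma rowE01 : ∀ j, ⁅bas g 9, bas g j⁆ = lv g (br 9 j) := by
  obtain ⟨-, -, -, -, e11, e21, e31, e32⟩ := pos (x := g.E10) (y := g.E01) (p := g.E11)
    (q := g.E21) (r := g.E31) (s := g.E32) rfl rfl rfl rfl g.serreE1 g.serreE2
  have e10 : ⁅g.E01, g.E10⁆ = -g.E11 := by rw [G2Gens.E11, lie_skew]
  have h31 : ⁅g.H01, g.F31⁆ = g.F31 := by simpa [bas, br, table, lv] using rowH01 g 1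
  have f11 : ⁅g.E01, g.F11⁆ = g.F10 := by
    rw [G2Gens.F11, leibniz_lie, g.hE01F01, g.hE01F10, g.hH01F10, lie_zero]; module
  have f21 : ⁅g.E01, g.F21⁆ = 0 := by
    rw [G2Gens.F21, lie_smul, leibniz_lie, g.hE01F10, f11]; simp
  have f31 : ⁅g.E01, g.F31⁆ = 0 := by
    rw [G2Gens.F31, lie_smul, leibniz_lie, g.hE01F10, f21]; simp
  have f32 : ⁅g.E01, g.F32⁆ = g.F31 := by
    rw [G2Gens.F32, leibniz_lie, g.hE01F01, f31, h31]; simp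
  intro j
  rcases j with _|_|_|_|_|_|_|_|_|_|_|_|_|_|j <;>
    simp [bas, br, table, lv, f11, f21, f31, f32, e10, e11, e21, e31, e32, skew_of g.hH10E01,
      skew_of g.hH01E01, g.hE01F10, g.hE01F01]

lemma rowF10 : ∀ j, ⁅bas g 5, bas g j⁆ = lv g (br 5 j) := by
  obtain ⟨f11, f21, f31, f32, -⟩ := posF g
  have f01 : ⁅g.F10, g.F01⁆ = -g.F11 := by rw [G2Gens.F11, lie_skew]
  have h11 : ⁅g.H10, g.E11⁆ = -g.E11 := by simpa [bas, br, table, lv] using rowH10 g 10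
  have h21 : ⁅g.H10, g.E21⁆ = g.E21 := by simpa [bas, br, table, lv] using rowH10 g 11
  have k11 : ⁅g.E01, g.E10⁆ = -g.E11 := by rw [G2Gens.E11, lie_skew]
  have k12 : ⁅g.E11, g.E10⁆ = (2 : ℂ) • g.E21 := by rw [G2Gens.E21, smul_smul]; norm_num
  have k13 : ⁅g.E21, g.E01⁆ = 0 := by
    have : ⁅g.E01, g.E21⁆ = 0 := by simpa [bas, br, table, lv] using rowE01 g 11
    simpa using skew_of this
  have e11 : ⁅g.F10, g.E11⁆ = (3 : ℂ) • g.E01 := by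
    rw [G2Gens.E11, leibniz_lie, skew_of g.hE10F10, skew_of g.hE01F10, neg_lie, g.hH10E01,
      neg_zero, lie_zero]; module
  have e21 : ⁅g.F10, g.E21⁆ = (-2 : ℂ) • g.E11 := by
    rw [G2Gens.E21, lie_smul, leibniz_lie, skew_of g.hE10F10, e11, lie_neg, skew_of h11,
      smul_lie, k11]; module
  have e31 : ⁅g.F10, g.E31⁆ = -g.E21 := by
    rw [G2Gens.E31, lie_smul, leibniz_lie, skew_of g.hE10F10, e21, lie_neg, skew_of h21,
      smul_lie, k12]; module
  have e32 : ⁅g.F10, g.E32⁆ = 0 := by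
    rw [G2Gens.E32, leibniz_lie, e31, neg_lie, k13, skew_of g.hE01F10]; simp
  intro j
  rcases j with _|_|_|_|_|_|_|_|_|_|_|_|_|_|j <;>
    simp [bas, br, table, lv, f01, f11, f21, f31, f32, e11, e21, e31, e32, skew_of g.hH10F10,
      skew_of g.hH01F10, skew_of g.hE10F10, skew_of g.hE01F10]

lemma rowF01 : ∀ j, ⁅bas g 4, bas g j⁆ = lv g (br 4 j) := by
  obtain ⟨-, -, -, -, f11, f21, f31, f32⟩ := posF g
  have f10 : ⁅g.F01, g.F10⁆ = g.F11 := rfl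
  have h31 : ⁅g.H01, g.E31⁆ = -g.E31 := by simpa [bas, br, table, lv] using rowH01 g 12
  have e11 : ⁅g.F01, g.E11⁆ = -g.E10 := by
    rw [G2Gens.E11, leibniz_lie, skew_of g.hE10F01, skew_of g.hE01F01, lie_neg,
      skew_of g.hH01E10, neg_zero, zero_lie]; module
  have e21 : ⁅g.F01, g.E21⁆ = 0 := by
    rw [G2Gens.E21, lie_smul, leibniz_lie, skew_of g.hE10F01, e11]; simp
  have e31 : ⁅g.F01, g.E31⁆ = 0 := by
    rw [G2Gens.E31, lie_smul, leibniz_lie, skew_of g.hE10F01, e21]; simp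
  have e32 : ⁅g.F01, g.E32⁆ = -g.E31 := by
    rw [G2Gens.E32, leibniz_lie, e31, skew_of g.hE01F01, lie_neg, skew_of h31]; simp
  intro j
  rcases j with _|_|_|_|_|_|_|_|_|_|_|_|_|_|j <;>
    simp [bas, br, table, lv, f10, f11, f21, f31, f32, e11, e21, e31, e32, skew_of g.hH10F01,
      skew_of g.hH01F01, skew_of g.hE10F01, skew_of g.hE01F01]

lemma bU_zero (j : ℕ) : bU g (j + 14) = 0 := by simp [bU, bas, ι_zero]

lemma rows (x : ℕ) : Row (bU g) x := by
  have r4 := row_of_lie g (rowF01 g)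
  have r5 := row_of_lie g (rowF10 g)
  have r8 := row_of_lie g (rowE10 g)
  have r9 := row_of_lie g (rowE01 g)
  have r10 : Row (bU g) 10 := row_of 1 (by norm_num) (y := 8) (z := 9)
    (by simp only [bU]; rw [← ι_lie, ← ι_smul]; simp [bas, G2Gens.E11]) r8 r9 (bU_zero g)
    (fun j => by simp [br, table]) (by decide +kernel)
  have r11 : Row (bU g) 11 := row_of 2 (by norm_num) (y := 10) (z := 8)
    (by simp only [bU]; rw [← ι_lie, ← ι_smul]; simp [bas, G2Gens.E21]) r10 r8 (bU_zero g)
    (fun j => by simp [br, table]) (by decide +kernel)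
  have r12 : Row (bU g) 12 := row_of 3 (by norm_num) (y := 11) (z := 8)
    (by simp only [bU]; rw [← ι_lie, ← ι_smul]; simp [bas, G2Gens.E31]) r11 r8 (bU_zero g)
    (fun j => by simp [br, table]) (by decide +kernel)
  have r13 : Row (bU g) 13 := row_of 1 (by norm_num) (y := 12) (z := 9)
    (by simp only [bU]; rw [← ι_lie, ← ι_smul]; simp [bas, G2Gens.E32]) r12 r9 (bU_zero g)
    (fun j => by simp [br, table]) (by decide +kernel)
  have r3 : Row (bU g) 3 := row_of 1 (by norm_num) (y := 4) (z := 5)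
    (by simp only [bU]; rw [← ι_lie, ← ι_smul]; simp [bas, G2Gens.F11]) r4 r5 (bU_zero g)
    (fun j => by simp [br, table]) (by decide +kernel)
  have r2 : Row (bU g) 2 := row_of 2 (by norm_num) (y := 5) (z := 3)
    (by simp only [bU]; rw [← ι_lie, ← ι_smul]; simp [bas, G2Gens.F21]) r5 r3 (bU_zero g)
    (fun j => by simp [br, table]) (by decide +kernel)
  have r1 : Row (bU g) 1 := row_of 3 (by norm_num) (y := 5) (z := 2)
    (by simp only [bU]; rw [← ι_lie, ← ι_smul]; simp [bas, G2Gens.F31]) r5 r2 (bU_zero g)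
    (fun j => by simp [br, table]) (by decide +kernel)
  have r0 : Row (bU g) 0 := row_of 1 (by norm_num) (y := 4) (z := 1)
    (by simp only [bU]; rw [← ι_lie, ← ι_smul]; simp [bas, G2Gens.F32]) r4 r1 (bU_zero g)
    (fun j => by simp [br, table]) (by decide +kernel)
  rcases x with _|_|_|_|_|_|_|_|_|_|_|_|_|_|x
  · exact r0
  · exact r1
  · exact r2
  · exact r3
  · exact r4
  · exact r5
  · exact row_of_lie g (rowH10 g)
  · exact row_of_lie g (rowH01 g)
  · exact r8
  · exact r9
  · exact r10
  · exact r11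
  · exact r12
  · exact r13
  · intro j
    simp [bU_zero, br, table, tailTo]

/-- The left ideal generated by the positive part. -/
noncomputable def idl : Submodule (UniversalEnvelopingAlgebra ℂ L)
    (UniversalEnvelopingAlgebra ℂ L) := Submodule.span _ {ιU g.E10, ιU g.E01}

lemma mem_lie {x y z : L} (c : ℂ) (h : z = c • ⁅x, y⁆) (hx : ιU x ∈ idl g)
    (hy : ιU y ∈ idl g) : ιU z ∈ idl g := by
  rw [h, ι_smul, ι_lie]
  exact csmul_mem c ((idl g).sub_mem ((idl g).smul_mem (ιU x) hy) ((idl g).smul_mem (ιU y) hx))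

lemma mem_idl (k : ℕ) (hk : 8 ≤ k) : bU g k ∈ idl g := by
  have h8 : ιU g.E10 ∈ idl g := Submodule.subset_span (by simp)
  have h9 : ιU g.E01 ∈ idl g := Submodule.subset_span (by simp)
  have h10 : ιU g.E11 ∈ idl g := mem_lie g 1 (by simp [G2Gens.E11]) h8 h9
  have h11 : ιU g.E21 ∈ idl g := mem_lie g _ rfl h10 h8
  have h12 : ιU g.E31 ∈ idl g := mem_lie g _ rfl h11 h8
  have h13 : ιU g.E32 ∈ idl g := mem_lie g 1 (by simp [G2Gens.E32]) h12 h9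
  obtain ⟨k, rfl⟩ := Nat.exists_eq_add_of_le' hk
  rcases k with _|_|_|_|_|_|k
  · exact h8
  · exact h9
  · exact h10
  · exact h11
  · exact h12
  · exact h13
  · rw [bU_zero]; exact (idl g).zero_mem

/-- `9 v` as a list. -/
def vP : Poly := [(2, [11, 11, 11]), (-9, [11, 12, 10]), (9, [11, 13, 8]),
  (-27, [12, 12, 9]), (27, [13, 12, 7]), (27, [13, 13, 4])]

lemma ev_vP : ev (bU g) vP = (9 : ℂ) • g.vU := by
  simp only [vP, ev_cons, ev_nil, wv_cons, wv_nil, bU, bas, G2Gens.vU, G2Gens.aU, G2Gens.bU,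
    G2Gens.cU, mul_sub, smul_sub, smul_smul, mul_one, mul_assoc]
  push_cast
  module

lemma adU_smul (x : L) (c : ℂ) (f : UniversalEnvelopingAlgebra ℂ L) :
    adU x (c • f) = c • adU x f := by
  simp [adU, smul_sub]

lemma ev_iter (x n : ℕ) (c : ℂ) (p : Poly) (f : UniversalEnvelopingAlgebra ℂ L)
    (h : ev (bU g) p = c • f) :
    ev (bU g) ((lin (adW x))^[n] p) = c • (adU (bas g x))^[n] f := by
  induction n generalizing p f with
  | zero => exact h
  | succ n ih =>
    apply ih
    rw [ev_linAd (rows g x), h, ← adU_smul]; rfl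

lemma final (x m y n k : ℕ) (q : Poly) (h : UniversalEnvelopingAlgebra ℂ L)
    (hq : ev (bU g) q = (9 : ℂ) • h)
    (hc : ((lin red)^[k] ((lin (adW x))^[m] ((lin (adW y))^[n] vP)
      ++ smulP (-1) q)).isEmpty = true) :
    g.EqModN ((adU (bas g x))^[m] ((adU (bas g y))^[n] g.vU)) h := by
  have h1 := mem_of_red (mem_idl g) (rows g) k _ hc
  rw [ev_append, ev_smulP, hq, ev_iter g x m 9 _ _ (ev_iter g y n 9 _ _ (ev_vP g))] at h1
  have h2 := csmul_mem (9 : ℂ)⁻¹ h1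
  obtain ⟨A, B, hAB⟩ := Submodule.mem_span_pair.1 h2
  refine ⟨A, B, ?_⟩
  rw [smul_eq_mul, smul_eq_mul] at hAB
  rw [hAB]
  push_cast
  module

/-- The linear polynomial `a H10 + b H01 + c`. -/
def hP (a b c : ℤ) : Poly := [(a, [6]), (b, [7]), (c, [])]

lemma ev_hP (a b c : ℤ) : ev (bU g) (hP a b c)
    = (a : ℂ) • ιU g.H10 + (b : ℂ) • ιU g.H01 + (c : ℂ) • 1 := by
  simp [hP, bU, bas, add_assoc]

end lie

end G2Proof


/-- **Lemma 3.4 (lem-second-case).**  With `v = (2/9)a³ − ab − 3c` (the image under Zhu's map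
of the singular vector of `N(−4/3, 0)` of type `G₂⁽¹⁾`), the polynomials `q`, `p₁`, `p₂` of
Lemma 3.4 arise, up to nonzero rational constants, from `v` modulo `U(𝔤)𝔫₊`. -/
theorem G2Gens.level_minus_four_thirds_polynomials
    {L : Type*} [LieRing L] [LieAlgebra ℂ L] (g : G2Gens L) :
    ∃ C C₁ C₂ : ℚ, C ≠ 0 ∧ C₁ ≠ 0 ∧ C₂ ≠ 0 ∧
      g.EqModN ((adU g.E21)^[3] ((adU g.F21)^[6] g.vU))
        ((C : ℂ) • (((2 : ℂ) / 9) • (ιU g.H21 * (ιU g.H21 - 1) * (ιU g.H21 - 2))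
          + ιU g.H21 * (ιU g.H21 - 2)
          + (3 : ℂ) • (ιU g.H01 * (ιU g.H01 + 2)))) ∧
      g.EqModN ((adU g.E10)^[3] ((adU g.F31)^[3] g.vU))
        ((C₁ : ℂ) • (ιU g.H10 * (ιU g.H10 - 1) * (ιU g.H10 - 2))) ∧
      g.EqModN ((adU g.E11)^[3] ((adU g.F32)^[3] g.vU))
        ((C₂ : ℂ) • (((2 : ℂ) / 9) • (ιU g.H11 * (ιU g.H11 - 1) * (ιU g.H11 - 2))
          + (6 : ℂ) • (ιU g.H01 * ιU g.H32))) := by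
  have two : (2 : UniversalEnvelopingAlgebra ℂ L) = (2 : ℂ) • 1 := by
    rw [two_smul]; norm_num
  refine ⟨-4320, 8, 36, by norm_num, by norm_num, by norm_num, ?_, ?_, ?_⟩
  · refine G2Proof.final g 11 3 2 6 6
      (G2Proof.smulP (-4320)
        (G2Proof.smulP 2 (G2Proof.mulP (G2Proof.mulP (G2Proof.hP 2 3 0) (G2Proof.hP 2 3 (-1)))
          (G2Proof.hP 2 3 (-2)))
        ++ G2Proof.smulP 9 (G2Proof.mulP (G2Proof.hP 2 3 0) (G2Proof.hP 2 3 (-2)))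
        ++ G2Proof.smulP 27 (G2Proof.mulP (G2Proof.hP 0 1 0) (G2Proof.hP 0 1 2))))
      _ ?_ (by decide +kernel)
    simp only [G2Proof.ev_smulP, G2Proof.ev_append, G2Proof.ev_mulP, G2Proof.ev_hP, G2Gens.H21,
      G2Proof.ι_add, G2Proof.ι_smul, two]
    push_cast
    simp only [zero_smul, one_smul, add_zero, zero_add, neg_smul, ← sub_eq_add_neg]
    module
  · refine G2Proof.final g 8 3 1 3 6
      (G2Proof.smulP 72 (G2Proof.mulP (G2Proof.mulP (G2Proof.hP 1 0 0) (G2Proof.hP 1 0 (-1)))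
          (G2Proof.hP 1 0 (-2))))
      _ ?_ (by decide +kernel)
    simp only [G2Proof.ev_smulP, G2Proof.ev_append, G2Proof.ev_mulP, G2Proof.ev_hP, two]
    push_cast
    simp only [zero_smul, one_smul, add_zero, zero_add, neg_smul, ← sub_eq_add_neg]
    module
  · refine G2Proof.final g 10 3 0 3 6
      (G2Proof.smulP 36
        (G2Proof.smulP 2 (G2Proof.mulP (G2Proof.mulP (G2Proof.hP 1 3 0) (G2Proof.hP 1 3 (-1)))
          (G2Proof.hP 1 3 (-2)))
        ++ G2Proof.smulP 54 (G2Proof.mulP (G2Proof.hP 0 1 0) (G2Proof.hP 1 2 0))))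
      _ ?_ (by decide +kernel)
    simp only [G2Proof.ev_smulP, G2Proof.ev_append, G2Proof.ev_mulP, G2Proof.ev_hP, G2Gens.H11,
      G2Gens.H32, G2Proof.ι_add, G2Proof.ι_smul, two]
    push_cast
    simp only [zero_smul, one_smul, add_zero, zero_add, neg_smul, ← sub_eq_add_neg]
    module
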